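/- For the Freund manifold with the above diagonal Fisher metric, the α-scalar curvature is constant equal to −3(α²−1)/2; in particular the scalar curvature of the Levi-Civita connection (α=0) is 3/2. -/

import Mathlib

open MeasureTheory Real

/-- The Freund bivariate mixture exponential density. -/
noncomputable def freund (a1 b1 a2 b2 : ℝ) (x y : ℝ) : ℝ :=
  if 0 < x ∧ x < y then a1 * b2 * Real.exp (-b2 * y - (a1 + a2 - b2) * x)
  else if 0 < y ∧ y < x then a2 * b1 * Real.exp (-b1 * x - (a1 + a2 - b1) * y)
  else 0

/-- Partial derivative in the `i`-th parameter. -/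
noncomputable def pd (i : Fin 4) (F : (Fin 4 → ℝ) → ℝ) (p : Fin 4 → ℝ) : ℝ :=
  deriv (fun t => F (Function.update p i t)) (p i)

/-- Log-likelihood as a function of the parameters `(α₁, β₁, α₂, β₂)`. -/
noncomputable def ll (x y : ℝ) (p : Fin 4 → ℝ) : ℝ :=
  Real.log (freund (p 0) (p 1) (p 2) (p 3) x y)

/-- The Fisher information metric of the Freund manifold (diagonal form). -/
noncomputable def met (p : Fin 4 → ℝ) : Matrix (Fin 4) (Fin 4) ℝ :=
  Matrix.diagonal
    ![1 / ((p 0) ^ 2 + p 0 * p 2),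
      p 2 / ((p 1) ^ 2 * (p 0 + p 2)),
      1 / ((p 2) ^ 2 + p 0 * p 2),
      p 0 / ((p 3) ^ 2 * (p 0 + p 2))]

/-- Christoffel symbols of the α-connection (lowered indices):
`Γ^{(α)}_{ij,k} = E[(∂ᵢ∂ⱼ log f)(∂ₖ log f)] + ((1-α)/2) E[(∂ᵢ log f)(∂ⱼ log f)(∂ₖ log f)]`. -/
noncomputable def chLow (al : ℝ) (i j k : Fin 4) (p : Fin 4 → ℝ) : ℝ :=
  ∫ x in Set.Ioi (0:ℝ), ∫ y in Set.Ioi (0:ℝ),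
    (pd i (pd j (ll x y)) p * pd k (ll x y) p +
      (1 - al) / 2 * (pd i (ll x y) p * pd j (ll x y) p * pd k (ll x y) p)) *
        freund (p 0) (p 1) (p 2) (p 3) x y

/-- Christoffel symbols of the α-connection with an upper index. -/
noncomputable def chUp (al : ℝ) (h i j : Fin 4) (p : Fin 4 → ℝ) : ℝ :=
  ∑ k : Fin 4, (met p)⁻¹ h k * chLow al i j k p

/-- Curvature tensor `R^h_{ijk}` of the α-connection. -/
noncomputable def riem (al : ℝ) (h i j k : Fin 4) (p : Fin 4 → ℝ) : ℝ :=
  pd i (chUp al h j k) p - pd j (chUp al h i k) p +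
    ∑ l : Fin 4, (chUp al h i l p * chUp al l j k p - chUp al h j l p * chUp al l i k p)

/-- α-Ricci tensor: contraction of the α-curvature tensor. -/
noncomputable def ricci (al : ℝ) (j k : Fin 4) (p : Fin 4 → ℝ) : ℝ :=
  ∑ h : Fin 4, riem al h h j k p

/-- α-scalar curvature: full contraction `g^{jk} R^{(α)}_{jk}`. -/
noncomputable def scalarCurv (al : ℝ) (p : Fin 4 → ℝ) : ℝ :=
  ∑ j : Fin 4, ∑ k : Fin 4, (met p)⁻¹ j k * ricci al j k p

/-!
Write `s = α₁ + α₂`. On `{x < y}` put `(u, v) = (x, y - x)`, and on `{y < x}` put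
`(u, v) = (y, x - y)`. Conditionally on either event, which have probabilities `α₁ / s` and
`α₂ / s`, the variables `u` and `v` are independent and exponential, `u` of rate `s` and `v` of
rate `β₂`, respectively `β₁`. Each component of the score is affine in one of `u` and `v`, so the
Christoffel symbols reduce to moments of order at most three of exponential laws. Interchanging
the two components of the observation is a symmetry of the whole picture, acting on indices by
`i ↦ i + 2`; hence only half of the Ricci tensor has to be computed.
-/

open ProbabilityTheory Set Topology

theorem measurePreserving_add_quadrant :
    MeasurePreserving (fun z : ℝ × ℝ ↦ (z.1, z.1 + z.2))
      (volume.restrict (Ioi 0 ×ˢ Ioi 0)) (volume.restrict {z | 0 < z.1 ∧ z.1 ≤ z.2}) := by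
  have preimage_eq : (fun z : ℝ × ℝ ↦ (z.1, z.1 + z.2)) ⁻¹' {z | 0 < z.1 ∧ z.1 ≤ z.2} =
      Ioi 0 ×ˢ Ici 0 := by
    ext z
    simp
  have quadrant_ae_eq : (Ioi 0 ×ˢ Ioi 0 : Set (ℝ × ℝ)) =ᵐ[volume] Ioi 0 ×ˢ Ici 0 :=
    Measure.set_prod_ae_eq (ae_eq_refl _) Ioi_ae_eq_Ici
  rw [Measure.restrict_congr_set quadrant_ae_eq, ← preimage_eq]
  exact (measurePreserving_prod_add volume volume).restrict_preimage (by measurability)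

theorem measurePreserving_add_swap_quadrant :
    MeasurePreserving (fun z : ℝ × ℝ ↦ (z.1 + z.2, z.1))
      (volume.restrict (Ioi 0 ×ˢ Ioi 0)) (volume.restrict {z | 0 < z.2 ∧ z.2 < z.1}) := by
  have preimage_eq : (fun z : ℝ × ℝ ↦ (z.1 + z.2, z.1)) ⁻¹' {z | 0 < z.2 ∧ z.2 < z.1} =
      Ioi 0 ×ˢ Ioi 0 := by
    ext z
    simp
  rw [← preimage_eq]
  exact (Measure.measurePreserving_swap.comp
    (measurePreserving_prod_add volume volume)).restrict_preimage (by measurability)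

theorem integral_Ioi_Ioi_eq_add {E : Type*} [NormedAddCommGroup E] [NormedSpace ℝ E]
    {F : ℝ → ℝ → E}
    (hlt : IntegrableOn (fun z : ℝ × ℝ ↦ F z.1 (z.1 + z.2)) (Ioi 0 ×ˢ Ioi 0))
    (hgt : IntegrableOn (fun z : ℝ × ℝ ↦ F (z.1 + z.2) z.1) (Ioi 0 ×ˢ Ioi 0)) :
    ∫ x in Ioi 0, ∫ y in Ioi 0, F x y =
      (∫ z in Ioi 0 ×ˢ Ioi 0, F z.1 (z.1 + z.2)) + ∫ z in Ioi 0 ×ˢ Ioi 0, F (z.1 + z.2) z.1 := by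
  let G : ℝ × ℝ → E := fun z ↦ F z.1 z.2
  let above : Set (ℝ × ℝ) := {z | 0 < z.1 ∧ z.1 ≤ z.2}
  let below : Set (ℝ × ℝ) := {z | 0 < z.2 ∧ z.2 < z.1}
  have quadrant_eq : Ioi 0 ×ˢ Ioi 0 = above ∪ below := by
    ext z
    simp only [above, below, mem_prod, mem_Ioi, mem_union, mem_ofPred_eq]
    grind
  have disjoint_above_below : Disjoint above below :=
    Set.disjoint_left.2 fun z hz hz' ↦ hz.2.not_gt hz'.2
  have emb : MeasurableEmbedding (fun z : ℝ × ℝ ↦ (z.1, z.1 + z.2)) :=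
    (MeasurableEquiv.shearAddRight ℝ).measurableEmbedding
  have emb_swap : MeasurableEmbedding (fun z : ℝ × ℝ ↦ (z.1 + z.2, z.1)) :=
    MeasurableEquiv.prodComm.measurableEmbedding.comp emb
  have integrableOn_above : IntegrableOn G above :=
    (measurePreserving_add_quadrant.integrable_comp_emb emb).1 hlt
  have integrableOn_below : IntegrableOn G below :=
    (measurePreserving_add_swap_quadrant.integrable_comp_emb emb_swap).1 hgt
  calc ∫ x in Ioi 0, ∫ y in Ioi 0, F x y
    _ = ∫ z in Ioi 0 ×ˢ Ioi 0, G z :=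
      (setIntegral_prod G (quadrant_eq ▸ integrableOn_above.union integrableOn_below)).symm
    _ = (∫ z in above, G z) + ∫ z in below, G z := by
      rw [quadrant_eq, setIntegral_union disjoint_above_below (by measurability)
        integrableOn_above integrableOn_below]
    _ = _ := by
      rw [← measurePreserving_add_quadrant.integral_comp emb,
        ← measurePreserving_add_swap_quadrant.integral_comp emb_swap]

theorem expMeasure_eq_withDensity_Ioi (r : ℝ) :
    expMeasure r =
      (volume.restrict (Ioi 0)).withDensity fun x ↦ ENNReal.ofReal (r * exp (-(r * x))) := by
  rw [Measure.restrict_congr_set Ioi_ae_eq_Ici, ← withDensity_indicator measurableSet_Ici]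
  change volume.withDensity (exponentialPDF r) = _
  congr 1 with x
  by_cases hx : 0 ≤ x <;> simp [exponentialPDF_eq, hx]

theorem expMeasure_prod_expMeasure (r s : ℝ) :
    (expMeasure r).prod (expMeasure s) = (volume.restrict (Ioi 0 ×ˢ Ioi 0)).withDensity
      fun z ↦ ENNReal.ofReal (r * exp (-(r * z.1))) * ENNReal.ofReal (s * exp (-(s * z.2))) := by
  rw [expMeasure_eq_withDensity_Ioi, expMeasure_eq_withDensity_Ioi,
    prod_withDensity (by fun_prop) (by fun_prop), Measure.prod_restrict, ← Measure.volume_eq_prod]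

theorem ae_pos_expMeasure_prod (r s : ℝ) :
    ∀ᵐ z ∂(expMeasure r).prod (expMeasure s), 0 < z.1 ∧ 0 < z.2 := by
  rw [expMeasure_prod_expMeasure]
  exact (withDensity_absolutelyContinuous _ _).ae_le
    (ae_restrict_mem (measurableSet_Ioi.prod measurableSet_Ioi))

theorem integral_expMeasure {r : ℝ} (hr : 0 < r) (g : ℝ → ℝ) :
    ∫ x, g x ∂expMeasure r = ∫ x in Ioi 0, r * exp (-(r * x)) * g x := by
  rw [expMeasure_eq_withDensity_Ioi,
    integral_withDensity_eq_integral_toReal_smul (by fun_prop) (by simp)]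
  simp [ENNReal.toReal_ofReal, hr.le, (exp_pos _).le]

theorem integral_pow_expMeasure {r : ℝ} (hr : 0 < r) (n : ℕ) :
    ∫ x, x ^ n ∂expMeasure r = n.factorial / r ^ n := by
  have gamma_integral :
      ∫ x in Ioi (0 : ℝ), x ^ n * exp (-(r * x)) = (1 / r) ^ (n + 1) * n.factorial := by
    have := integral_rpow_mul_exp_neg_mul_Ioi (a := n + 1) (by positivity) hr
    simp only [Gamma_nat_eq_factorial, add_sub_cancel_right] at this
    exact_mod_cast this
  calc ∫ x, x ^ n ∂expMeasure r
    _ = ∫ x in Ioi 0, r * (x ^ n * exp (-(r * x))) := by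
      rw [integral_expMeasure hr]
      congr with x
      ring
    _ = r * ((1 / r) ^ (n + 1) * n.factorial) := by rw [integral_const_mul, gamma_integral]
    _ = n.factorial / r ^ n := by
      rw [one_div_pow, pow_succ']
      field_simp

theorem integrable_pow_expMeasure {r : ℝ} (hr : 0 < r) (n : ℕ) :
    Integrable (fun x ↦ x ^ n) (expMeasure r) :=
  not_imp_comm.1 integral_undef (by rw [integral_pow_expMeasure hr]; positivity)

theorem integrableOn_mul_exp_mul_exp {r s : ℝ} (hr : 0 < r) (hs : 0 < s) {g : ℝ × ℝ → ℝ}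
    (hg : Integrable g ((expMeasure r).prod (expMeasure s))) :
    IntegrableOn (fun z ↦ g z * (exp (-(r * z.1)) * exp (-(s * z.2)))) (Ioi 0 ×ˢ Ioi 0) := by
  rw [expMeasure_prod_expMeasure, integrable_withDensity_iff (by fun_prop)
    (by simp [ENNReal.mul_lt_top])] at hg
  refine (hg.const_mul (r * s)⁻¹).congr (ae_of_all _ fun z ↦ ?_)
  simp only [ENNReal.toReal_mul, ENNReal.toReal_ofReal, hr.le, hs.le, (exp_pos _).le, mul_nonneg]
  field_simp

theorem integral_expMeasure_prod {r s : ℝ} (hr : 0 < r) (hs : 0 < s) (g : ℝ × ℝ → ℝ) :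
    ∫ z, g z ∂(expMeasure r).prod (expMeasure s) =
      r * s * ∫ z in Ioi 0 ×ˢ Ioi 0, g z * (exp (-(r * z.1)) * exp (-(s * z.2))) := by
  rw [expMeasure_prod_expMeasure,
    integral_withDensity_eq_integral_toReal_smul (by fun_prop) (by simp [ENNReal.mul_lt_top]),
    ← integral_const_mul]
  congr with z
  simp only [ENNReal.toReal_mul, ENNReal.toReal_ofReal, hr.le, hs.le, (exp_pos _).le, mul_nonneg,
    smul_eq_mul]
  ring

section Mixture

variable {a1 b1 a2 b2 : ℝ}

theorem freund_of_lt {u v : ℝ} (hu : 0 < u) (hv : 0 < v) :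
    freund a1 b1 a2 b2 u (u + v) = a1 * b2 * (exp (-((a1 + a2) * u)) * exp (-(b2 * v))) := by
  rw [freund, if_pos ⟨hu, by linarith⟩, ← exp_add]
  ring_nf

theorem freund_swap (x y : ℝ) : freund a1 b1 a2 b2 x y = freund a2 b2 a1 b1 y x := by
  unfold freund
  grind

theorem eqOn_mul_freund (g : ℝ × ℝ → ℝ) :
    EqOn (fun z ↦ g z * freund a1 b1 a2 b2 z.1 (z.1 + z.2))
      (fun z ↦ a1 * b2 * (g z * (exp (-((a1 + a2) * z.1)) * exp (-(b2 * z.2)))))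
      (Ioi 0 ×ˢ Ioi 0) := fun z hz ↦ by
  simp only [freund_of_lt hz.1 hz.2]
  ring

theorem integrableOn_mul_freund {g : ℝ × ℝ → ℝ} (hs : 0 < a1 + a2) (hb2 : 0 < b2)
    (hg : Integrable g ((expMeasure (a1 + a2)).prod (expMeasure b2))) :
    IntegrableOn (fun z ↦ g z * freund a1 b1 a2 b2 z.1 (z.1 + z.2)) (Ioi 0 ×ˢ Ioi 0) :=
  (integrableOn_congr_fun (eqOn_mul_freund g) (measurableSet_Ioi.prod measurableSet_Ioi)).2
    ((integrableOn_mul_exp_mul_exp hs hb2 hg).const_mul _)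

theorem setIntegral_mul_freund (g : ℝ × ℝ → ℝ) (hs : 0 < a1 + a2) (hb2 : 0 < b2) :
    ∫ z in Ioi 0 ×ˢ Ioi 0, g z * freund a1 b1 a2 b2 z.1 (z.1 + z.2) =
      a1 / (a1 + a2) * ∫ z, g z ∂(expMeasure (a1 + a2)).prod (expMeasure b2) := by
  rw [setIntegral_congr_fun (measurableSet_Ioi.prod measurableSet_Ioi) (eqOn_mul_freund g),
    integral_const_mul, integral_expMeasure_prod hs hb2]
  field

theorem integral_mul_freund {g : ℝ → ℝ → ℝ} (hs : 0 < a1 + a2) (hb1 : 0 < b1) (hb2 : 0 < b2)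
    (hlt : Integrable (fun z ↦ g z.1 (z.1 + z.2)) ((expMeasure (a1 + a2)).prod (expMeasure b2)))
    (hgt : Integrable (fun z ↦ g (z.1 + z.2) z.1) ((expMeasure (a1 + a2)).prod (expMeasure b1))) :
    ∫ x in Ioi 0, ∫ y in Ioi 0, g x y * freund a1 b1 a2 b2 x y =
      a1 / (a1 + a2) * ∫ z, g z.1 (z.1 + z.2) ∂(expMeasure (a1 + a2)).prod (expMeasure b2) +
        a2 / (a1 + a2) * ∫ z, g (z.1 + z.2) z.1 ∂(expMeasure (a1 + a2)).prod (expMeasure b1) := by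
  rw [add_comm a1 a2] at hgt hs
  have integrableOn_gt := integrableOn_mul_freund (b1 := b2) hs hb1 hgt
  have integral_gt := setIntegral_mul_freund (b1 := b2) (fun z ↦ g (z.1 + z.2) z.1) hs hb1
  simp only [freund_swap (a1 := a2), add_comm a2] at integrableOn_gt integral_gt hs
  rw [integral_Ioi_Ioi_eq_add (integrableOn_mul_freund hs hb2 hlt) integrableOn_gt,
    setIntegral_mul_freund (fun z ↦ g z.1 (z.1 + z.2)) hs hb2, integral_gt]

end Mixture

/-- The coefficients of the cubic `ℓᵢ ℓⱼ ℓₖ` in `x`, where `ℓᵢ x = c i + d i * x`. -/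
def affineCoeff₃ {ι : Type*} (c d : ι → ℝ) (i j k : ι) : Fin 4 → ℝ :=
  ![c i * c j * c k, c i * c j * d k + c i * d j * c k + d i * c j * c k,
    c i * d j * d k + d i * c j * d k + d i * d j * c k, d i * d j * d k]

/-- The mixed moment `E[ℓᵢ ℓⱼ ℓₖ]` of the affine functions `ℓᵢ X = c i + d i * X` of an
exponential variable `X` of rate `r`. -/
noncomputable def affineMoment₃ {ι : Type*} (r : ℝ) (c d : ι → ℝ) (i j k : ι) : ℝ :=
  ∑ n : Fin 4, affineCoeff₃ c d i j k n * ((n : ℕ).factorial / r ^ (n : ℕ))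

section AffineMoments

variable {ι : Type*} {r : ℝ}

theorem affine_mul_affine_mul_affine_eq_sum (c d : ι → ℝ) (i j k : ι) (x : ℝ) :
    (c i + d i * x) * (c j + d j * x) * (c k + d k * x) =
      ∑ n : Fin 4, affineCoeff₃ c d i j k n * x ^ (n : ℕ) := by
  simp [Fin.sum_univ_four, affineCoeff₃]
  ring

theorem integrable_affine_mul_affine_mul_affine (hr : 0 < r) (c d : ι → ℝ) (i j k : ι) :
    Integrable (fun x ↦ (c i + d i * x) * (c j + d j * x) * (c k + d k * x)) (expMeasure r) := by
  simp only [affine_mul_affine_mul_affine_eq_sum]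
  exact integrable_finsetSum _ fun n _ ↦ (integrable_pow_expMeasure hr n).const_mul _

theorem integral_affine_mul_affine_mul_affine (hr : 0 < r) (c d : ι → ℝ) (i j k : ι) :
    ∫ x, (c i + d i * x) * (c j + d j * x) * (c k + d k * x) ∂expMeasure r =
      affineMoment₃ r c d i j k := by
  simp only [affine_mul_affine_mul_affine_eq_sum]
  rw [integral_finsetSum _ fun (n : Fin 4) _ ↦
    (integrable_pow_expMeasure hr n).const_mul (affineCoeff₃ c d i j k n)]
  simp only [integral_const_mul, integral_pow_expMeasure hr, affineMoment₃]

theorem integrable_affine (hr : 0 < r) (a b : ℝ) :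
    Integrable (fun x ↦ a + b * x) (expMeasure r) := by
  simpa using integrable_affine_mul_affine_mul_affine hr ![a, 1, 1] ![b, 0, 0] 0 1 2

theorem integral_affine (hr : 0 < r) (a b : ℝ) :
    ∫ x, a + b * x ∂expMeasure r = a + b / r := by
  simpa [affineMoment₃, affineCoeff₃, Fin.sum_univ_four, div_eq_mul_inv] using
    integral_affine_mul_affine_mul_affine hr ![a, 1, 1] ![b, 0, 0] 0 1 2

end AffineMoments

theorem eventually_pos {ι : Type*} [Finite ι] {p : ι → ℝ} (hp : ∀ i, 0 < p i) :
    ∀ᶠ q in 𝓝 p, ∀ i, 0 < q i :=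
  Filter.eventually_all.2 fun i ↦ (continuous_apply i).continuousAt.eventually (lt_mem_nhds (hp i))

theorem pd_congr {F G : (Fin 4 → ℝ) → ℝ} {p : Fin 4 → ℝ} (h : F =ᶠ[𝓝 p] G) (i : Fin 4) :
    pd i F p = pd i G p := by
  have tendsto_update : Filter.Tendsto (Function.update p i) (𝓝 (p i)) (𝓝 p) := by
    simpa using ((continuous_const (y := p)).update i continuous_id).tendsto (p i)
  exact Filter.EventuallyEq.deriv_eq (tendsto_update.eventually h)

theorem pd_congr_of_pos {F G : (Fin 4 → ℝ) → ℝ} {p : Fin 4 → ℝ} (hp : ∀ i, 0 < p i)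
    (h : ∀ q : Fin 4 → ℝ, (∀ i, 0 < q i) → F q = G q) (i : Fin 4) : pd i F p = pd i G p :=
  pd_congr ((eventually_pos hp).mono h) i

/-- The involution `(α₁, β₁, α₂, β₂) ↦ (α₂, β₂, α₁, β₁)` of the parameter space, induced by
interchanging the two components of the observation. -/
def exchange (p : Fin 4 → ℝ) : Fin 4 → ℝ := fun i ↦ p (i + 2)

theorem exchange_exchange (p : Fin 4 → ℝ) : exchange (exchange p) = p := by
  ext i
  fin_cases i <;> rfl

theorem exchange_update (p : Fin 4 → ℝ) (i : Fin 4) (t : ℝ) :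
    exchange (Function.update p i t) = Function.update (exchange p) (i + 2) t := by
  ext k
  fin_cases i <;> fin_cases k <;> rfl

theorem exchange_pos {p : Fin 4 → ℝ} (hp : ∀ i, 0 < p i) (i : Fin 4) : 0 < exchange p i :=
  hp (i + 2)

theorem pd_comp_exchange (i : Fin 4) (F : (Fin 4 → ℝ) → ℝ) (p : Fin 4 → ℝ) :
    pd i (fun q ↦ F (exchange q)) p = pd (i + 2) F (exchange p) := by
  have apply_add_two : exchange p (i + 2) = p i := congr_fun (exchange_exchange p) i
  simp only [pd, exchange_update, apply_add_two]

theorem ll_exchange (x y : ℝ) : ll x y = fun q ↦ ll y x (exchange q) := by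
  ext q
  exact congr_arg log (freund_swap x y)

theorem ll_of_lt {u v : ℝ} (hu : 0 < u) (hv : 0 < v) {p : Fin 4 → ℝ} (hp : ∀ i, 0 < p i) :
    ll u (u + v) p = log (p 0) - (p 0 + p 2) * u + (log (p 3) - p 3 * v) := by
  have h0 := (hp 0).ne'
  have h3 := (hp 3).ne'
  rw [ll, freund_of_lt hu hv, log_mul (by positivity) (by positivity), log_mul h0 h3,
    log_mul (by positivity) (by positivity), log_exp, log_exp]
  ring

/-- Intercepts of the first factor of `score`, affine in the earlier failure time. -/
noncomputable def minIntercept (p : Fin 4 → ℝ) : Fin 4 → ℝ := ![1 / p 0, 0, 0, 1]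

/-- Slopes of the first factor of `score`. -/
def minSlope : Fin 4 → ℝ := ![-1, 0, -1, 0]

/-- Intercepts of the second factor of `score`, affine in the residual lifetime. -/
noncomputable def residualIntercept (p : Fin 4 → ℝ) : Fin 4 → ℝ := ![1, 1, 1, 1 / p 3]

/-- Slopes of the second factor of `score`. -/
def residualSlope : Fin 4 → ℝ := ![0, 0, 0, -1]

/-- The score `∂ᵢ log f` at the observation `(u, u + v)`. Each component depends on only one of
`u` and `v`; it is written as a product so that its moments factor. -/
noncomputable def score (p : Fin 4 → ℝ) (i : Fin 4) (u v : ℝ) : ℝ :=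
  (minIntercept p i + minSlope i * u) * (residualIntercept p i + residualSlope i * v)

/-- The Hessian `∂ᵢ∂ⱼ log f` at an observation `(u, u + v)`. -/
noncomputable def hessian (p : Fin 4 → ℝ) : Matrix (Fin 4) (Fin 4) ℝ :=
  Matrix.diagonal ![-1 / p 0 ^ 2, 0, 0, -1 / p 3 ^ 2]

theorem pd_ll_of_lt {u v : ℝ} (hu : 0 < u) (hv : 0 < v) {p : Fin 4 → ℝ} (hp : ∀ i, 0 < p i)
    (i : Fin 4) : pd i (ll u (u + v)) p = score p i u v := by
  have h0 := (hp 0).ne'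
  have h3 := (hp 3).ne'
  rw [pd_congr_of_pos hp fun q ↦ ll_of_lt hu hv]
  fin_cases i <;>
    simp [pd, score, minIntercept, minSlope, residualIntercept, residualSlope, h0, h3,
      ← sub_eq_add_neg]

theorem pd_pd_ll_of_lt {u v : ℝ} (hu : 0 < u) (hv : 0 < v) {p : Fin 4 → ℝ} (hp : ∀ i, 0 < p i)
    (i j : Fin 4) : pd i (pd j (ll u (u + v))) p = hessian p i j := by
  have h0 := (hp 0).ne'
  have h3 := (hp 3).ne'
  rw [pd_congr_of_pos hp fun q hq ↦ pd_ll_of_lt hu hv hq j]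
  fin_cases i <;> fin_cases j <;>
    simp [pd, score, minIntercept, minSlope, residualIntercept, residualSlope, hessian, h0, h3,
      neg_div]

theorem pd_ll_of_gt {u v : ℝ} (hu : 0 < u) (hv : 0 < v) {p : Fin 4 → ℝ} (hp : ∀ i, 0 < p i)
    (i : Fin 4) : pd i (ll (u + v) u) p = score (exchange p) (i + 2) u v := by
  rw [ll_exchange, pd_comp_exchange, pd_ll_of_lt hu hv (exchange_pos hp)]

theorem pd_pd_ll_of_gt {u v : ℝ} (hu : 0 < u) (hv : 0 < v) {p : Fin 4 → ℝ} (hp : ∀ i, 0 < p i)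
    (i j : Fin 4) :
    pd i (pd j (ll (u + v) u)) p = hessian (exchange p) (i + 2) (j + 2) := by
  rw [ll_exchange, funext (pd_comp_exchange j (ll u (u + v))), pd_comp_exchange,
    pd_pd_ll_of_lt hu hv (exchange_pos hp)]

/-- The integrand `(∂ᵢ∂ⱼ log f)(∂ₖ log f) + κ (∂ᵢ log f)(∂ⱼ log f)(∂ₖ log f)` of the Christoffel
symbols at the observation `(u, u + v)`, where `κ` stands for `(1 - α) / 2`. -/
noncomputable def christoffelIntegrand (κ : ℝ) (p : Fin 4 → ℝ) (i j k : Fin 4) (u v : ℝ) : ℝ :=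
  hessian p i j * score p k u v + κ * (score p i u v * score p j u v * score p k u v)

/-- The conditional expectation of `christoffelIntegrand` given that the first component fails
first. -/
noncomputable def branchChristoffel (κ : ℝ) (p : Fin 4 → ℝ) (i j k : Fin 4) : ℝ :=
  hessian p i j * ((minIntercept p k + minSlope k / (p 0 + p 2)) *
      (residualIntercept p k + residualSlope k / p 3)) +
    κ * (affineMoment₃ (p 0 + p 2) (minIntercept p) minSlope i j k *
      affineMoment₃ (p 3) (residualIntercept p) residualSlope i j k)

section Connection

variable {p : Fin 4 → ℝ}

theorem integrable_score (hs : 0 < p 0 + p 2) (h3 : 0 < p 3) (i : Fin 4) :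
    Integrable (fun z ↦ score p i z.1 z.2) ((expMeasure (p 0 + p 2)).prod (expMeasure (p 3))) :=
  (integrable_affine hs _ _).mul_prod (integrable_affine h3 _ _)

theorem score_mul_score_mul_score (i j k : Fin 4) (u v : ℝ) :
    score p i u v * score p j u v * score p k u v =
      (minIntercept p i + minSlope i * u) * (minIntercept p j + minSlope j * u) *
        (minIntercept p k + minSlope k * u) *
      ((residualIntercept p i + residualSlope i * v) *
        (residualIntercept p j + residualSlope j * v) *
        (residualIntercept p k + residualSlope k * v)) := by
  simp only [score]
  ring

theorem integrable_score_mul_score_mul_score (hs : 0 < p 0 + p 2) (h3 : 0 < p 3) (i j k : Fin 4) :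
    Integrable (fun z ↦ score p i z.1 z.2 * score p j z.1 z.2 * score p k z.1 z.2)
      ((expMeasure (p 0 + p 2)).prod (expMeasure (p 3))) := by
  simp only [score_mul_score_mul_score]
  exact (integrable_affine_mul_affine_mul_affine hs _ _ i j k).mul_prod
    (integrable_affine_mul_affine_mul_affine h3 _ _ i j k)

theorem integrable_christoffelIntegrand (κ : ℝ) (hs : 0 < p 0 + p 2) (h3 : 0 < p 3)
    (i j k : Fin 4) : Integrable (fun z ↦ christoffelIntegrand κ p i j k z.1 z.2)
      ((expMeasure (p 0 + p 2)).prod (expMeasure (p 3))) :=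
  ((integrable_score hs h3 k).const_mul _).add
    ((integrable_score_mul_score_mul_score hs h3 i j k).const_mul _)

theorem integral_score (hs : 0 < p 0 + p 2) (h3 : 0 < p 3) (i : Fin 4) :
    ∫ z, score p i z.1 z.2 ∂(expMeasure (p 0 + p 2)).prod (expMeasure (p 3)) =
      (minIntercept p i + minSlope i / (p 0 + p 2)) *
        (residualIntercept p i + residualSlope i / p 3) := by
  have := isProbabilityMeasure_expMeasure hs
  have := isProbabilityMeasure_expMeasure h3
  rw [← integral_affine hs, ← integral_affine h3, ← integral_prod_mul]
  rfl

theorem integral_score_mul_score_mul_score (hs : 0 < p 0 + p 2) (h3 : 0 < p 3) (i j k : Fin 4) :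
    ∫ z, score p i z.1 z.2 * score p j z.1 z.2 * score p k z.1 z.2
        ∂(expMeasure (p 0 + p 2)).prod (expMeasure (p 3)) =
      affineMoment₃ (p 0 + p 2) (minIntercept p) minSlope i j k *
        affineMoment₃ (p 3) (residualIntercept p) residualSlope i j k := by
  have := isProbabilityMeasure_expMeasure hs
  have := isProbabilityMeasure_expMeasure h3
  simp only [score_mul_score_mul_score]
  rw [← integral_affine_mul_affine_mul_affine hs, ← integral_affine_mul_affine_mul_affine h3,
    ← integral_prod_mul]

theorem integral_christoffelIntegrand (κ : ℝ) (hs : 0 < p 0 + p 2) (h3 : 0 < p 3)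
    (i j k : Fin 4) :
    ∫ z, christoffelIntegrand κ p i j k z.1 z.2
        ∂(expMeasure (p 0 + p 2)).prod (expMeasure (p 3)) =
      branchChristoffel κ p i j k := by
  rw [branchChristoffel, ← integral_score hs h3, ← integral_score_mul_score_mul_score hs h3,
    ← integral_const_mul, ← integral_const_mul,
    ← integral_add ((integrable_score hs h3 k).const_mul _)
      ((integrable_score_mul_score_mul_score hs h3 i j k).const_mul _)]
  rfl

theorem chLow_eq (al : ℝ) (hp : ∀ i, 0 < p i) (i j k : Fin 4) :
    chLow al i j k p =
      p 0 / (p 0 + p 2) * branchChristoffel ((1 - al) / 2) p i j k +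
        p 2 / (p 0 + p 2) *
          branchChristoffel ((1 - al) / 2) (exchange p) (i + 2) (j + 2) (k + 2) := by
  have hs : 0 < p 0 + p 2 := add_pos (hp 0) (hp 2)
  have hs' : 0 < exchange p 0 + exchange p 2 := add_pos (hp 2) (hp 0)
  have exchange_sum : exchange p 0 + exchange p 2 = p 0 + p 2 := add_comm _ _
  let g (x y : ℝ) : ℝ := pd i (pd j (ll x y)) p * pd k (ll x y) p +
    (1 - al) / 2 * (pd i (ll x y) p * pd j (ll x y) p * pd k (ll x y) p)
  have g_of_lt : (fun z : ℝ × ℝ ↦ christoffelIntegrand ((1 - al) / 2) p i j k z.1 z.2)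
      =ᵐ[(expMeasure (p 0 + p 2)).prod (expMeasure (p 3))] fun z ↦ g z.1 (z.1 + z.2) := by
    filter_upwards [ae_pos_expMeasure_prod _ _] with z hz
    simp only [g, christoffelIntegrand, pd_ll_of_lt hz.1 hz.2 hp, pd_pd_ll_of_lt hz.1 hz.2 hp]
  have g_of_gt : (fun z : ℝ × ℝ ↦ christoffelIntegrand ((1 - al) / 2) (exchange p)
      (i + 2) (j + 2) (k + 2) z.1 z.2)
      =ᵐ[(expMeasure (p 0 + p 2)).prod (expMeasure (p 1))] fun z ↦ g (z.1 + z.2) z.1 := by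
    filter_upwards [ae_pos_expMeasure_prod _ _] with z hz
    simp only [g, christoffelIntegrand, pd_ll_of_gt hz.1 hz.2 hp, pd_pd_ll_of_gt hz.1 hz.2 hp]
  have integrable_gt := integrable_christoffelIntegrand ((1 - al) / 2) hs' (hp 1)
    (i + 2) (j + 2) (k + 2)
  have integral_gt := integral_christoffelIntegrand ((1 - al) / 2) hs' (hp 1)
    (i + 2) (j + 2) (k + 2)
  simp only [exchange_sum, show exchange p 3 = p 1 from rfl] at integrable_gt integral_gt
  calc chLow al i j k p
    _ = _ := integral_mul_freund hs (hp 1) (hp 3)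
      ((integrable_christoffelIntegrand _ hs (hp 3) i j k).congr g_of_lt)
      (integrable_gt.congr g_of_gt)
    _ = _ := by
      rw [← integral_congr_ae g_of_lt, ← integral_congr_ae g_of_gt,
        integral_christoffelIntegrand _ hs (hp 3), integral_gt]

/-- The diagonal entries of the inverse of the Fisher metric `met`. -/
noncomputable def metInv (p : Fin 4 → ℝ) : Fin 4 → ℝ :=
  ![p 0 * (p 0 + p 2), p 1 ^ 2 * (p 0 + p 2) / p 2, p 2 * (p 0 + p 2), p 3 ^ 2 * (p 0 + p 2) / p 0]

/-- The Christoffel symbols `Γʰᵢⱼ` of the `α`-connection in closed form, with `κ = (1 - α) / 2`. -/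
noncomputable def christoffel (κ : ℝ) (p : Fin 4 → ℝ) : Fin 4 → Matrix (Fin 4) (Fin 4) ℝ :=
  let a₁ := p 0; let b₁ := p 1; let a₂ := p 2; let b₂ := p 3; let s := p 0 + p 2
  ![!![(κ - 1) / a₁ + (1 - 3 * κ) / s, 0, -κ / s, 0;
      0, (1 - κ) * (a₁ * a₂) / (b₁ ^ 2 * s), 0, 0;
      -κ / s, 0, (1 - κ) * (1 / a₂ - 1 / s), 0;
      0, 0, 0, -((1 - κ) * (a₁ * a₂)) / (b₂ ^ 2 * s)],
    !![0, -κ / s, 0, 0;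
      -κ / s, -2 * κ / b₁, κ * (1 / a₂ - 1 / s), 0;
      0, κ * (1 / a₂ - 1 / s), 0, 0;
      0, 0, 0, 0],
    !![(1 - κ) * (1 / a₁ - 1 / s), 0, -κ / s, 0;
      0, -((1 - κ) * (a₁ * a₂)) / (b₁ ^ 2 * s), 0, 0;
      -κ / s, 0, (κ - 1) / a₂ + (1 - 3 * κ) / s, 0;
      0, 0, 0, (1 - κ) * (a₁ * a₂) / (b₂ ^ 2 * s)],
    !![0, 0, 0, κ * (1 / a₁ - 1 / s);
      0, 0, 0, 0;
      0, 0, 0, -κ / s;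
      κ * (1 / a₁ - 1 / s), 0, -κ / s, -2 * κ / b₂]]

theorem inv_met_eq_diagonal (hp : ∀ i, 0 < p i) : (met p)⁻¹ = Matrix.diagonal (metInv p) := by
  have h0 := hp 0
  have h1 := hp 1
  have h2 := hp 2
  have h3 := hp 3
  refine Matrix.inv_eq_right_inv ?_
  rw [met, Matrix.diagonal_mul_diagonal, ← Matrix.diagonal_one]
  congr 1 with i
  fin_cases i <;> simp [metInv] <;> field

theorem chUp_eq_metInv_mul (al : ℝ) (hp : ∀ i, 0 < p i) (h i j : Fin 4) :
    chUp al h i j p = metInv p h * chLow al i j h p := by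
  simp only [chUp, inv_met_eq_diagonal hp, Matrix.diagonal_apply, ite_mul, zero_mul,
    Finset.sum_ite_eq, Finset.mem_univ, if_true]

set_option maxHeartbeats 1000000 in
-- 64 index cases
theorem chUp_eq_christoffel (al : ℝ) (hp : ∀ i, 0 < p i) (h i j : Fin 4) :
    chUp al h i j p = christoffel ((1 - al) / 2) p h i j := by
  have h0 := (hp 0).ne'
  have h1 := (hp 1).ne'
  have h2 := (hp 2).ne'
  have h3 := (hp 3).ne'
  have hs := (add_pos (hp 0) (hp 2)).ne'
  rw [chUp_eq_metInv_mul al hp, chLow_eq al hp]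
  generalize (1 - al) / 2 = κ
  fin_cases h <;> fin_cases i <;> fin_cases j <;>
    simp [branchChristoffel, hessian, affineMoment₃, affineCoeff₃, minIntercept, minSlope,
      residualIntercept, residualSlope, metInv, christoffel, exchange, Fin.sum_univ_four,
      Nat.factorial, add_comm (p 2) (p 0), h0, h1, h2, h3, hs] <;>
    field_simp <;> ring

theorem chLow_exchange (al : ℝ) (hp : ∀ i, 0 < p i) (i j k : Fin 4) :
    chLow al (i + 2) (j + 2) (k + 2) (exchange p) = chLow al i j k p := by
  have add_two_add_two (i : Fin 4) : i + 2 + 2 = i := by rw [add_assoc]; exact add_zero i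
  rw [chLow_eq al (exchange_pos hp), chLow_eq al hp, exchange_exchange]
  simp only [add_two_add_two, show exchange p 0 = p 2 from rfl, show exchange p 2 = p 0 from rfl,
    add_comm (p 2)]
  exact add_comm _ _

theorem metInv_exchange (p : Fin 4 → ℝ) (i : Fin 4) : metInv (exchange p) (i + 2) = metInv p i := by
  fin_cases i <;> simp [metInv, exchange, add_comm (p 2)]

theorem chUp_exchange (al : ℝ) (hp : ∀ i, 0 < p i) (h i j : Fin 4) :
    chUp al (h + 2) (i + 2) (j + 2) (exchange p) = chUp al h i j p := by
  rw [chUp_eq_metInv_mul al (exchange_pos hp), chUp_eq_metInv_mul al hp, metInv_exchange,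
    chLow_exchange al hp]

theorem riem_exchange (al : ℝ) (hp : ∀ i, 0 < p i) (h i j k : Fin 4) :
    riem al (h + 2) (i + 2) (j + 2) (k + 2) (exchange p) = riem al h i j k p := by
  have pd_chUp_exchange (h i j k : Fin 4) :
      pd (i + 2) (chUp al (h + 2) (j + 2) (k + 2)) (exchange p) = pd i (chUp al h j k) p := by
    rw [← pd_comp_exchange]
    exact pd_congr_of_pos hp (fun q hq ↦ chUp_exchange al hq h j k) i
  rw [riem, riem, pd_chUp_exchange, pd_chUp_exchange, ← Equiv.sum_comp (Equiv.addRight (2 : Fin 4))]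
  simp only [Equiv.coe_addRight, chUp_exchange al hp]

theorem ricci_exchange (al : ℝ) (hp : ∀ i, 0 < p i) (j k : Fin 4) :
    ricci al (j + 2) (k + 2) (exchange p) = ricci al j k p := by
  rw [ricci, ricci, ← Equiv.sum_comp (Equiv.addRight (2 : Fin 4))]
  simp only [Equiv.coe_addRight, riem_exchange al hp]

theorem pd_of_partialFraction {F : (Fin 4 → ℝ) → ℝ} {i : Fin 4} {a c d k : ℝ} (hi : 0 < p i)
    (ha : p i + a ≠ 0) (hF : ∀ t, 0 < t → F (Function.update p i t) = k + c / t + d / (t + a)) :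
    pd i F p = -c / p i ^ 2 - d / (p i + a) ^ 2 := by
  have eventuallyEq : (fun t ↦ F (Function.update p i t)) =ᶠ[𝓝 (p i)]
      fun t ↦ k + c / t + d / (t + a) := (lt_mem_nhds hi).mono hF
  have hasDerivAt_div := (hasDerivAt_const (p i) c).fun_div (hasDerivAt_id' (p i)) hi.ne'
  have hasDerivAt_div_add :=
    (hasDerivAt_const (p i) d).fun_div ((hasDerivAt_id' (p i)).add_const a) ha
  rw [pd, eventuallyEq.deriv_eq, ((hasDerivAt_div.const_add k).fun_add hasDerivAt_div_add).deriv]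
  ring

theorem update_pos {ι : Type*} [DecidableEq ι] {p : ι → ℝ} (hp : ∀ i, 0 < p i) (i : ι) {t : ℝ}
    (ht : 0 < t) (j : ι) : 0 < Function.update p i t j := by
  rcases eq_or_ne j i with rfl | hj
  · simpa using ht
  · simpa [hj] using hp j

theorem pd_chUp (al : ℝ) (hp : ∀ i, 0 < p i) {h i j k : Fin 4} {a c d m : ℝ}
    (ha : p i + a ≠ 0)
    (hΓ : ∀ t, 0 < t →
      christoffel ((1 - al) / 2) (Function.update p i t) h j k = m + c / t + d / (t + a)) :
    pd i (chUp al h j k) p = -c / p i ^ 2 - d / (p i + a) ^ 2 :=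
  pd_of_partialFraction (hp i) ha fun t ht ↦ by
    rw [chUp_eq_christoffel al (update_pos hp i ht), hΓ t ht]

theorem riem_self (al : ℝ) (h k : Fin 4) (p : Fin 4 → ℝ) : riem al h h h k p = 0 := by
  simp [riem]

theorem pd_chUp_eq_zero (al : ℝ) (hp : ∀ i, 0 < p i) {h j k : Fin 4} (i : Fin 4)
    (hΓ : ∀ q, christoffel ((1 - al) / 2) q h j k = 0) : pd i (chUp al h j k) p = 0 := by
  rw [pd_congr_of_pos hp fun q hq ↦ (chUp_eq_christoffel al hq h j k).trans (hΓ q)]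
  exact deriv_const _ _

/- In the coordinates `s`, `w = α₁ / s`, `β₁`, `β₂` the Fisher metric is
`(d log s)² + dw² / (w (1 - w)) + (1 - w) (d log β₁)² + w (d log β₂)²`, locally the product of a
line and a 3-sphere of radius 2, whose Ricci tensor is half of the metric minus `(d log s)²`; this
is the case `α = 0`. -/
theorem ricci_zero_zero (al : ℝ) (hp : ∀ i, 0 < p i) :
    ricci al 0 0 p = (1 - al ^ 2) / 2 * (met p 0 0 - 1 / (p 0 + p 2) ^ 2) := by
  have h0 := (hp 0).ne'
  have h2 := (hp 2).ne'
  have hs : p 0 + p 2 ≠ 0 := (add_pos (hp 0) (hp 2)).ne'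
  have pd_one_100 : pd 1 (chUp al 1 0 0) p = 0 := pd_chUp_eq_zero al hp 1 fun _ ↦ rfl
  have pd_two_200 : pd 2 (chUp al 2 0 0) p = (1 + al) / 2 / (p 0 + p 2) ^ 2 := by
    rw [pd_chUp (m := (1 + al) / 2 / p 0) (c := 0) (d := -((1 + al) / 2)) al hp
      (add_comm (p 0) _ ▸ hs) fun t _ ↦ by simp [christoffel]; ring]
    ring
  have pd_three_300 : pd 3 (chUp al 3 0 0) p = 0 := pd_chUp_eq_zero al hp 3 fun _ ↦ rfl
  have pd_zero_110 : pd 0 (chUp al 1 1 0) p = (1 - al) / 2 / (p 0 + p 2) ^ 2 := by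
    rw [pd_chUp (m := 0) (c := 0) (d := -((1 - al) / 2)) al hp hs
      fun t _ ↦ by simp [christoffel]]
    ring
  have pd_zero_220 : pd 0 (chUp al 2 2 0) p = (1 - al) / 2 / (p 0 + p 2) ^ 2 := by
    rw [pd_chUp (m := 0) (c := 0) (d := -((1 - al) / 2)) al hp hs
      fun t _ ↦ by simp [christoffel]]
    ring
  have pd_zero_330 : pd 0 (chUp al 3 3 0) p =
      (1 - al) / 2 * (1 / (p 0 + p 2) ^ 2 - 1 / p 0 ^ 2) := by
    rw [pd_chUp (m := 0) (c := (1 - al) / 2) (d := -((1 - al) / 2)) al hp hs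
      fun t _ ↦ by simp [christoffel]; ring]
    ring
  rw [ricci, Fin.sum_univ_four, riem_self]
  simp only [riem, Fin.sum_univ_four, pd_one_100, pd_two_200, pd_three_300, pd_zero_110,
    pd_zero_220, pd_zero_330, chUp_eq_christoffel al hp]
  simp only [christoffel, met, Matrix.of_apply, Matrix.cons_val, Matrix.diagonal_apply_eq]
  field

theorem ricci_one_one (al : ℝ) (hp : ∀ i, 0 < p i) :
    ricci al 1 1 p = (1 - al ^ 2) / 2 * met p 1 1 := by
  have h0 := (hp 0).ne'
  have h1 := (hp 1).ne'
  have h2 := (hp 2).ne'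
  have hs : p 0 + p 2 ≠ 0 := (add_pos (hp 0) (hp 2)).ne'
  have pd_zero_011 : pd 0 (chUp al 0 1 1) p =
      (1 + al) / 2 * p 2 ^ 2 / (p 1 ^ 2 * (p 0 + p 2) ^ 2) := by
    rw [pd_chUp (m := (1 + al) / 2 * p 2 / p 1 ^ 2) (c := 0)
      (d := -((1 + al) / 2 * p 2 ^ 2 / p 1 ^ 2)) al hp hs
      fun t ht ↦ by have := (add_pos ht (hp 2)).ne'; simp [christoffel]; field]
    field
  have pd_two_211 : pd 2 (chUp al 2 1 1) p =
      -((1 + al) / 2 * p 0 ^ 2) / (p 1 ^ 2 * (p 0 + p 2) ^ 2) := by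
    rw [pd_chUp (m := -((1 + al) / 2 * p 0 / p 1 ^ 2)) (c := 0)
      (d := (1 + al) / 2 * p 0 ^ 2 / p 1 ^ 2) al hp (add_comm (p 0) _ ▸ hs)
      fun t ht ↦ by have := (add_pos (hp 0) ht).ne'; simp [christoffel, add_comm t]; field,
      add_comm (p 2)]
    field
  have pd_three_311 : pd 3 (chUp al 3 1 1) p = 0 := pd_chUp_eq_zero al hp 3 fun _ ↦ rfl
  have pd_one_001 : pd 1 (chUp al 0 0 1) p = 0 := pd_chUp_eq_zero al hp 1 fun _ ↦ rfl
  have pd_one_221 : pd 1 (chUp al 2 2 1) p = 0 := pd_chUp_eq_zero al hp 1 fun _ ↦ rfl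
  have pd_one_331 : pd 1 (chUp al 3 3 1) p = 0 := pd_chUp_eq_zero al hp 1 fun _ ↦ rfl
  rw [ricci, Fin.sum_univ_four, riem_self]
  simp only [riem, Fin.sum_univ_four, pd_zero_011, pd_two_211, pd_three_311, pd_one_001,
    pd_one_221, pd_one_331, chUp_eq_christoffel al hp]
  simp only [christoffel, met, Matrix.of_apply, Matrix.cons_val, Matrix.diagonal_apply_eq]
  field

theorem metInv_mul_ricci_add (al : ℝ) (hp : ∀ i, 0 < p i) :
    metInv p 0 * ricci al 0 0 p + metInv p 1 * ricci al 1 1 p =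
      (1 - al ^ 2) / 2 * (1 + p 2 / (p 0 + p 2)) := by
  have h0 := hp 0
  have h1 := hp 1
  have h2 := hp 2
  rw [ricci_zero_zero al hp, ricci_one_one al hp]
  simp only [metInv, met, Matrix.cons_val, Matrix.diagonal_apply_eq]
  field_simp
  ring

theorem scalarCurv_eq (al : ℝ) (hp : ∀ i, 0 < p i) : scalarCurv al p = -3 * (al ^ 2 - 1) / 2 := by
  have hs : p 0 + p 2 ≠ 0 := (add_pos (hp 0) (hp 2)).ne'
  calc scalarCurv al p
    _ = ∑ j, metInv p j * ricci al j j p := by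
      simp only [scalarCurv, inv_met_eq_diagonal hp, Matrix.diagonal_apply, ite_mul, zero_mul,
        Finset.sum_ite_eq, Finset.mem_univ, if_true]
    _ = (metInv p 0 * ricci al 0 0 p + metInv p 1 * ricci al 1 1 p) +
        (metInv p 2 * ricci al 2 2 p + metInv p 3 * ricci al 3 3 p) := by
      rw [Fin.sum_univ_four]
      ring
    _ = (1 - al ^ 2) / 2 * (1 + p 2 / (p 0 + p 2)) +
        (1 - al ^ 2) / 2 * (1 + p 0 / (p 2 + p 0)) := by
      rw [metInv_mul_ricci_add al hp, ← metInv_exchange p 2, ← metInv_exchange p 3,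
        ← ricci_exchange al hp 2 2, ← ricci_exchange al hp 3 3]
      exact congr_arg _ (metInv_mul_ricci_add al (exchange_pos hp))
    _ = -3 * (al ^ 2 - 1) / 2 := by
      rw [add_comm (p 2)]
      field_simp
      ring

end Connection

theorem freund_alpha_scalar_curvature (al : ℝ) (p : Fin 4 → ℝ) (hp : ∀ i, 0 < p i) :
    scalarCurv al p = -3 * (al ^ 2 - 1) / 2 ∧ scalarCurv 0 p = 3 / 2 := by
  refine ⟨scalarCurv_eq al hp, ?_⟩
  rw [scalarCurv_eq 0 hp]
  norm_num
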